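/- Let X be a real Banach space with a Schauder basis (e_n). Then (e_n) is quasi-greedy and reverse conservative if and only if there exists a constant C such that ‖x − G_m(x)‖ ≤ C‖x − Σ_{i∈A} a_i e_i‖ for all x ∈ X, all m ∈ ℕ, every greedy ordering for x, every finite set A ⊂ ℕ with |A| = m and min A > β_m(x), and all real scalars (a_i)_{i∈A} (i.e., ‖x − G_m(x)‖ ≤ C·σ^R_m(x)). -/

import Mathlib

open Filter Topology

/-- A Schauder basis of a real normed space `X`, given by basis vectors `e n` together with
biorthogonal (coordinate) functionals `f n`, such that every `x` is the limit of its
partial-sum expansion `∑_{n < N} f n x • e n`. -/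
structure SchauderBasisSys (X : Type*) [NormedAddCommGroup X] [NormedSpace ℝ X] where
  e : ℕ → X
  f : ℕ → X →L[ℝ] ℝ
  biorth : ∀ m n : ℕ, f m (e n) = if m = n then (1 : ℝ) else 0
  expansion : ∀ x : X,
    Filter.Tendsto (fun N : ℕ => ∑ n ∈ Finset.range N, f n x • e n) Filter.atTop (nhds x)

namespace SchauderBasisSys

variable {X : Type*} [NormedAddCommGroup X] [NormedSpace ℝ X]

/-- The coordinate projection onto a finite set `A` of indices: `P_A x = ∑_{i ∈ A} e_i^*(x) e_i`. -/
noncomputable def P (S : SchauderBasisSys X) (A : Finset ℕ) (x : X) : X :=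
  ∑ i ∈ A, S.f i x • S.e i

/-- The indicator vector `1_A = ∑_{i ∈ A} e_i`. -/
noncomputable def ind (S : SchauderBasisSys X) (A : Finset ℕ) : X :=
  ∑ i ∈ A, S.e i

/-- A greedy ordering for `x`: an injection `ρ : ℕ → ℕ` whose range contains the support of `x`
and which rearranges the coordinates of `x` in nonincreasing order of absolute value. -/
def IsGreedyOrdering (S : SchauderBasisSys X) (x : X) (ρ : ℕ → ℕ) : Prop :=
  Function.Injective ρ ∧ (∀ n : ℕ, S.f n x ≠ 0 → n ∈ Set.range ρ) ∧
    ∀ j k : ℕ, j ≤ k → |S.f (ρ k) x| ≤ |S.f (ρ j) x|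

/-- The greedy set `Λ_m(x) = {ρ(0), …, ρ(m-1)}` associated to a greedy ordering `ρ`. -/
def Lam (ρ : ℕ → ℕ) (m : ℕ) : Finset ℕ := (Finset.range m).image ρ

/-- The `m`-th greedy approximation `G_m(x) = ∑_{j < m} e_{ρ(j)}^*(x) e_{ρ(j)}`. -/
noncomputable def G (S : SchauderBasisSys X) (x : X) (ρ : ℕ → ℕ) (m : ℕ) : X :=
  ∑ j ∈ Finset.range m, S.f (ρ j) x • S.e (ρ j)

/-- Quasi-greedy: `‖G_m(x)‖ ≤ K ‖x‖` uniformly. -/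
def QuasiGreedy (S : SchauderBasisSys X) : Prop :=
  ∃ K : ℝ, ∀ (x : X) (ρ : ℕ → ℕ) (m : ℕ),
    S.IsGreedyOrdering x ρ → ‖S.G x ρ m‖ ≤ K * ‖x‖

/-- Conservative: `‖1_A‖ ≤ Γ ‖1_B‖` whenever `|A| ≤ |B|` and `max A < min B`. -/
def Conservative (S : SchauderBasisSys X) : Prop :=
  ∃ Γ : ℝ, ∀ A B : Finset ℕ, A.card ≤ B.card →
    (∀ i ∈ A, ∀ j ∈ B, i < j) → ‖S.ind A‖ ≤ Γ * ‖S.ind B‖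

/-- Reverse conservative: `‖1_A‖ ≤ Γ ‖1_B‖` whenever `|A| ≤ |B|` and `max B < min A`. -/
def ReverseConservative (S : SchauderBasisSys X) : Prop :=
  ∃ Γ : ℝ, ∀ A B : Finset ℕ, A.card ≤ B.card →
    (∀ i ∈ A, ∀ j ∈ B, j < i) → ‖S.ind A‖ ≤ Γ * ‖S.ind B‖

/-- Partially greedy: `‖x - G_m(x)‖ ≤ C ‖∑_{n ≥ m} e_n^*(x) e_n‖ = C ‖x - P_{[0,m)}(x)‖`. -/
def PartiallyGreedy (S : SchauderBasisSys X) : Prop :=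
  ∃ C : ℝ, ∀ (x : X) (ρ : ℕ → ℕ) (m : ℕ), S.IsGreedyOrdering x ρ →
    ‖x - S.G x ρ m‖ ≤ C * ‖x - S.P (Finset.range m) x‖

/-- Almost greedy: `‖x - G_m(x)‖ ≤ C inf{‖x - P_A(x)‖ : |A| ≤ m}`. -/
def AlmostGreedy (S : SchauderBasisSys X) : Prop :=
  ∃ C : ℝ, ∀ (x : X) (ρ : ℕ → ℕ) (m : ℕ) (A : Finset ℕ), S.IsGreedyOrdering x ρ →
    A.card ≤ m → ‖x - S.G x ρ m‖ ≤ C * ‖x - S.P A x‖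

end SchauderBasisSys

open SchauderBasisSys

/-!
Everything is controlled by a uniform bound `K` on the projections onto greedy sets. Such a bound
lets one shrink the coordinates on a greedy set to a common absolute value `t` and then discard
signs and indices: if all coordinates of `y` on a greedy set `D` have absolute value at least `t`,
then `t ‖1_B‖ ≤ 4 K² ‖y‖` for every `B ⊆ D`.

Given a greedy set `Λ` of `x` whose coordinates outside `Λ` have absolute value at most `t`, and
`y = x - ∑_{i ∈ A} a_i e_i` with `A` to the right of `Λ`, the set `Λ` together with the large
coordinates of `y` in `A` is greedy for `y`. Up to two vectors supported in `A` with coordinates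
at most `t`, the remainders of `x` and of `y` agree; reverse conservativeness bounds these two
vectors by multiples of `t ‖1_Λ‖`, hence by multiples of `‖y‖`.

Conversely, `a = 0` gives quasi-greediness, and `x = 1_{A ∪ B}` with greedy set `B` gives reverse
conservativeness.
-/

open scoped NNReal

section FiniteSums

variable {ι E : Type*} [SeminormedAddCommGroup E] [NormedSpace ℝ E]

-- Induction on `A`: subtracting the least coefficient `c k` from all of them splits off
-- `c k • ∑ i ∈ A, v i` and removes `k`.
lemma norm_sum_smul_le_of_superlevel (A : Finset ι) (v : ι → E) (c : ι → ℝ) {T M : ℝ}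
    (hc₀ : ∀ i ∈ A, 0 ≤ c i) (hT : 0 ≤ T) (hcT : ∀ i ∈ A, c i ≤ T)
    (hM : ∀ s, 0 < s → ‖∑ i ∈ A with s ≤ c i, v i‖ ≤ M) :
    ‖∑ i ∈ A, c i • v i‖ ≤ T * M := by
  classical
  induction A using Finset.strongInduction generalizing c T with
  | H A ih =>
    rcases A.eq_empty_or_nonempty with rfl | hA
    · simpa using mul_nonneg hT ((norm_nonneg _).trans (hM 1 one_pos))
    obtain ⟨k, hk, hmin⟩ := A.exists_min_image c hA
    have hsplit : ∑ i ∈ A, c i • v i =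
        c k • ∑ i ∈ A, v i + ∑ i ∈ A.erase k, (c i - c k) • v i := by
      rw [Finset.sum_erase _ (by simp), Finset.smul_sum, ← Finset.sum_add_distrib]
      simp only [← add_smul, add_sub_cancel]
    have hhead : ‖c k • ∑ i ∈ A, v i‖ ≤ c k * M := by
      rw [norm_smul, Real.norm_of_nonneg (hc₀ k hk)]
      rcases (hc₀ k hk).eq_or_lt with h₀ | hpos
      · simp [← h₀]
      · have hfull := hM (c k) hpos
        rw [Finset.filter_true_of_mem hmin] at hfull
        gcongr
    have htail : ‖∑ i ∈ A.erase k, (c i - c k) • v i‖ ≤ (T - c k) * M := by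
      refine ih _ (Finset.erase_ssubset hk) (fun i => c i - c k)
        (fun i hi => sub_nonneg.2 (hmin i (Finset.mem_of_mem_erase hi)))
        (sub_nonneg.2 (hcT k hk))
        (fun i hi => sub_le_sub_right (hcT i (Finset.mem_of_mem_erase hi)) _) fun s hs => ?_
      convert hM (s + c k) (add_pos_of_pos_of_nonneg hs (hc₀ k hk)) using 3
      ext i
      simp only [Finset.mem_filter, Finset.mem_erase, le_sub_iff_add_le]
      refine ⟨fun h => ⟨h.1.2, h.2⟩, fun h => ⟨⟨?_, h.1⟩, h.2⟩⟩
      rintro rfl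
      linarith [h.2]
    calc ‖∑ i ∈ A, c i • v i‖ ≤ c k * M + (T - c k) * M :=
          hsplit ▸ norm_add_le_of_le hhead htail
      _ = T * M := by ring

lemma norm_sum_smul_le_of_abs_le (A : Finset ι) (v : ι → E) (c : ι → ℝ) {T M : ℝ}
    (hT : 0 ≤ T) (hc : ∀ i ∈ A, |c i| ≤ T) (hM : ∀ B ⊆ A, ‖∑ i ∈ B, v i‖ ≤ M) :
    ‖∑ i ∈ A, c i • v i‖ ≤ 2 * T * M := by
  have hpos : ‖∑ i ∈ A, (c i)⁺ • v i‖ ≤ T * M :=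
    norm_sum_smul_le_of_superlevel A v _ (fun i _ => posPart_nonneg _) hT
      (fun i hi => (sup_le (le_abs_self _) (abs_nonneg _)).trans (hc i hi))
      fun _ _ => hM _ (Finset.filter_subset _ _)
  have hneg : ‖∑ i ∈ A, (c i)⁻ • v i‖ ≤ T * M :=
    norm_sum_smul_le_of_superlevel A v _ (fun i _ => negPart_nonneg _) hT
      (fun i hi => (sup_le (neg_le_abs _) (abs_nonneg _)).trans (hc i hi))
      fun _ _ => hM _ (Finset.filter_subset _ _)
  calc ‖∑ i ∈ A, c i • v i‖ = ‖∑ i ∈ A, (c i)⁺ • v i - ∑ i ∈ A, (c i)⁻ • v i‖ := by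
        simp only [← Finset.sum_sub_distrib, ← sub_smul, posPart_sub_negPart]
    _ ≤ T * M + T * M := norm_sub_le_of_le hpos hneg
    _ = 2 * T * M := by ring

end FiniteSums

lemma exists_superset_card_eq_of_forall_lt {α : Type*} [LinearOrder α] [NoMaxOrder α] [Nonempty α]
    {A B : Finset α} (hAB : ∀ i ∈ A, ∀ j ∈ B, j < i) {m : ℕ} (hm : A.card ≤ m) :
    ∃ A' : Finset α, A ⊆ A' ∧ A'.card = m ∧ ∀ i ∈ A', ∀ j ∈ B, j < i := by
  have hinf : {i | ∀ j ∈ B, j < i}.Infinite := by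
    obtain ⟨b, hb⟩ := B.bddAbove
    exact (Set.Ioi_infinite b).mono fun i hi j hj => (hb hj).trans_lt hi
  obtain ⟨F, hF, hFcard⟩ :=
    (hinf.sdiff A.finite_toSet).exists_subset_card_eq (m - A.card)
  have hdisj : Disjoint A F := Finset.disjoint_right.2 fun i hi => (hF hi).2
  refine ⟨A ∪ F, Finset.subset_union_left, ?_, fun i hi => ?_⟩
  · rw [Finset.card_union_of_disjoint hdisj, hFcard, Nat.add_sub_cancel' hm]
  · exact (Finset.mem_union.1 hi).elim (hAB i) fun hiF => (hF hiF).1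

lemma exists_perm_monotone_comp {α : Type*} [LinearOrder α] {key : ℕ → α}
    (hkey : ∀ᶠ j in atTop, ∀ i, key i ≤ key j) :
    ∃ ρ : Equiv.Perm ℕ, Monotone (key ∘ ρ) := by
  obtain ⟨N, hN⟩ := eventually_atTop.1 hkey
  let σ := Tuple.sort fun i : Fin N => key i
  let ρ : Equiv.Perm ℕ := σ.extendDomain Fin.equivSubtype
  have hρ_lt : ∀ k (hk : k < N), ρ k = σ ⟨k, hk⟩ := fun k hk =>
    σ.extendDomain_apply_subtype Fin.equivSubtype hk
  have hρ_ge : ∀ k, N ≤ k → ρ k = k := fun k hk =>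
    σ.extendDomain_apply_not_subtype Fin.equivSubtype hk.not_gt
  refine ⟨ρ, fun j k hjk => ?_⟩
  rcases lt_or_ge k N with hk | hk
  · simp only [Function.comp_apply, hρ_lt k hk, hρ_lt j (hjk.trans_lt hk)]
    exact Tuple.monotone_sort (fun i : Fin N => key i) (Fin.mk_le_mk.2 hjk)
  · simpa only [Function.comp_apply, hρ_ge k hk] using hN k hk (ρ j)

namespace SchauderBasisSys

variable {X : Type*} [NormedAddCommGroup X] [NormedSpace ℝ X] {S : SchauderBasisSys X}

section Projections

variable (S)

lemma f_sum_smul_e (A : Finset ℕ) (a : ℕ → ℝ) (j : ℕ) :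
    S.f j (∑ i ∈ A, a i • S.e i) = if j ∈ A then a j else 0 := by
  simp [map_sum, S.biorth]

lemma f_P (A : Finset ℕ) (x : X) (j : ℕ) : S.f j (S.P A x) = if j ∈ A then S.f j x else 0 :=
  S.f_sum_smul_e A (fun i => S.f i x) j

lemma f_ind (A : Finset ℕ) (j : ℕ) : S.f j (S.ind A) = if j ∈ A then 1 else 0 := by
  simpa [ind] using S.f_sum_smul_e A 1 j

variable {S}

lemma P_P_of_subset {A B : Finset ℕ} (h : A ⊆ B) (x : X) : S.P A (S.P B x) = S.P A x :=
  Finset.sum_congr rfl fun i hi => by rw [f_P, if_pos (h hi)]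

lemma P_eq_smul_ind {A : Finset ℕ} {x : X} {r : ℝ} (h : ∀ i ∈ A, S.f i x = r) :
    S.P A x = r • S.ind A := by
  rw [P, ind, Finset.smul_sum]
  exact Finset.sum_congr rfl fun i hi => by rw [h i hi]

lemma sub_sum_sub_P_of_subset {A B : Finset ℕ} (h : A ⊆ B) (a : ℕ → ℝ) (x : X) :
    (x - ∑ i ∈ A, a i • S.e i) - S.P B (x - ∑ i ∈ A, a i • S.e i) = x - S.P B x := by
  have hP : S.P B (∑ i ∈ A, a i • S.e i) = ∑ i ∈ A, a i • S.e i := by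
    simp only [P, f_sum_smul_e, ite_smul, zero_smul]
    rw [Finset.sum_ite_mem, Finset.inter_eq_right.2 h]
  have hsub : S.P B (x - ∑ i ∈ A, a i • S.e i) = S.P B x - ∑ i ∈ A, a i • S.e i := by
    conv_rhs => rw [← hP]
    simp only [P, map_sub, sub_smul, Finset.sum_sub_distrib]
  rw [hsub]
  abel

lemma P_union {A B : Finset ℕ} (h : Disjoint A B) (x : X) :
    S.P (A ∪ B) x = S.P A x + S.P B x :=
  Finset.sum_union h

lemma norm_P_le_of_abs_f_le {A : Finset ℕ} {x : X} {t M : ℝ} (ht : 0 ≤ t)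
    (hx : ∀ i ∈ A, |S.f i x| ≤ t) (hM : ∀ B ⊆ A, ‖S.ind B‖ ≤ M) : ‖S.P A x‖ ≤ 2 * t * M :=
  norm_sum_smul_le_of_abs_le A S.e (fun i => S.f i x) ht hx hM

end Projections

/-- `D` is a greedy set of `x`: a possible value of `Λ_m(x)` with `m = |D|`, with ties between
coordinates of equal absolute value broken arbitrarily. -/
def IsGreedySet (S : SchauderBasisSys X) (x : X) (D : Finset ℕ) : Prop :=
  ∀ i ∈ D, ∀ j ∉ D, |S.f j x| ≤ |S.f i x|

lemma G_eq_P_Lam (S : SchauderBasisSys X) (x : X) {ρ : ℕ → ℕ} (hρ : Function.Injective ρ)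
    (m : ℕ) : S.G x ρ m = S.P (Lam ρ m) x := by
  rw [G, P, Lam, Finset.sum_image hρ.injOn]

lemma card_Lam {ρ : ℕ → ℕ} (hρ : Function.Injective ρ) (m : ℕ) : (Lam ρ m).card = m := by
  rw [Lam, Finset.card_image_of_injective _ hρ, Finset.card_range]

lemma Lam_card_eq {D : Finset ℕ} (ρ : Equiv.Perm ℕ)
    (hD : ∀ j k, j ≤ k → ρ k ∈ D → ρ j ∈ D) : Lam ρ D.card = D := by
  refine (Finset.eq_of_subset_of_card_le (fun d hd => ?_) (card_Lam ρ.injective _).le).symm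
  obtain ⟨k, rfl⟩ := ρ.surjective d
  have hsub : Lam ρ (k + 1) ⊆ D :=
    Finset.image_subset_iff.2 fun j hj => hD j k (Finset.mem_range_succ_iff.1 hj) hd
  have hk : k + 1 ≤ D.card := card_Lam ρ.injective (k + 1) ▸ Finset.card_le_card hsub
  exact Finset.mem_image_of_mem ρ (Finset.mem_range.2 hk)

lemma IsGreedyOrdering.isGreedySet_Lam {x : X} {ρ : ℕ → ℕ} (hρ : S.IsGreedyOrdering x ρ)
    (m : ℕ) : S.IsGreedySet x (Lam ρ m) := by
  obtain ⟨-, hsupp, hanti⟩ := hρ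
  intro i hi j hj
  obtain ⟨k, hk, rfl⟩ := Finset.mem_image.1 hi
  rcases eq_or_ne (S.f j x) 0 with h₀ | h₀
  · simp [h₀]
  · obtain ⟨l, rfl⟩ := hsupp j h₀
    have hml : m ≤ l := not_lt.1 fun hl => hj (Finset.mem_image_of_mem ρ (Finset.mem_range.2 hl))
    exact hanti k l ((Finset.mem_range.1 hk).le.trans hml)

lemma IsGreedySet.exists_isGreedyOrdering {x : X} {D F : Finset ℕ} (hD : S.IsGreedySet x D)
    (hF : ∀ n ∉ F, S.f n x = 0) : ∃ ρ, S.IsGreedyOrdering x ρ ∧ Lam ρ D.card = D := by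
  -- Lexicographic order: the indices in `D` come first, then larger coordinates come first.
  let key : ℕ → Prop ×ₗ ℝ := fun n => toLex (n ∉ D, -|S.f n x|)
  have hkey : ∀ᶠ j in atTop, ∀ i, key i ≤ key j := by
    obtain ⟨N, hN⟩ := (D ∪ F).exists_nat_subset_range
    filter_upwards [eventually_ge_atTop N] with j hj i
    have hjDF : j ∉ D ∪ F := fun h => (Finset.mem_range.1 (hN h)).not_ge hj
    rw [Finset.mem_union, not_or] at hjDF
    refine Prod.Lex.toLex_mono ⟨fun _ => hjDF.1, ?_⟩
    simp [hF j hjDF.2]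
  obtain ⟨ρ, hρ⟩ := exists_perm_monotone_comp hkey
  have hD_initial : ∀ j k, j ≤ k → ρ k ∈ D → ρ j ∈ D := fun j k hjk hk => by
    by_contra hj
    exact Prod.Lex.monotone_fst _ _ (hρ hjk) hj hk
  refine ⟨ρ, ⟨ρ.injective, fun n _ => ρ.surjective n, fun j k hjk => ?_⟩,
    Lam_card_eq ρ hD_initial⟩
  rcases Prod.Lex.toLex_le_toLex.1 (hρ hjk) with hlt | ⟨-, hle⟩
  · obtain ⟨hk, hj⟩ := Classical.not_imp.1 hlt.not_ge
    exact hD _ (not_not.1 hj) _ hk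
  · exact neg_le_neg_iff.1 hle

/-- `t` is a threshold for `D`: the coordinates of `x` are at least `t` in absolute value on `D`
and at most `t` off `D`. -/
def IsThreshold (S : SchauderBasisSys X) (x : X) (D : Finset ℕ) (t : ℝ) : Prop :=
  (∀ i ∈ D, t ≤ |S.f i x|) ∧ ∀ j ∉ D, |S.f j x| ≤ t

lemma IsGreedySet.exists_isThreshold {x : X} {D : Finset ℕ} (h : S.IsGreedySet x D)
    (hD : D.Nonempty) : ∃ t, S.IsThreshold x D t := by
  obtain ⟨i, hi, hmin⟩ := D.exists_min_image (fun i => |S.f i x|) hD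
  exact ⟨|S.f i x|, hmin, h i hi⟩

namespace IsThreshold

variable {x : X} {A D : Finset ℕ} {t : ℝ}

lemma nonneg (h : S.IsThreshold x D t) : 0 ≤ t := by
  obtain ⟨j, hj⟩ := Infinite.exists_notMem_finset D
  exact (abs_nonneg _).trans (h.2 j hj)

lemma isGreedySet (h : S.IsThreshold x D t) : S.IsGreedySet x D :=
  fun i hi j hj => (h.2 j hj).trans (h.1 i hi)

lemma exists_isThreshold_sub_sum (h : S.IsThreshold x D t) (hAD : Disjoint A D) (a : ℕ → ℝ) :
    ∃ E ⊆ A, S.IsThreshold (x - ∑ i ∈ A, a i • S.e i) (D ∪ E) t := by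
  set y := x - ∑ i ∈ A, a i • S.e i
  have hy : ∀ i ∉ A, S.f i y = S.f i x := fun i hi => by
    rw [map_sub, f_sum_smul_e, if_neg hi, sub_zero]
  refine ⟨{i ∈ A | t ≤ |S.f i y|}, Finset.filter_subset _ _, fun i hi => ?_, fun j hj => ?_⟩
  · rcases Finset.mem_union.1 hi with hiD | hiA
    · exact hy i (Finset.disjoint_right.1 hAD hiD) ▸ h.1 i hiD
    · exact (Finset.mem_filter.1 hiA).2
  · rw [Finset.mem_union, Finset.mem_filter, not_or, not_and, not_le] at hj
    by_cases hjA : j ∈ A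
    · exact (hj.2 hjA).le
    · exact hy j hjA ▸ h.2 j hj.1

end IsThreshold

/-- The projections onto greedy sets are bounded by `K`: quasi-greediness with constant `K`, stated
through greedy sets so that it applies to every vector, with or without a greedy ordering. -/
def GreedyProjectionBound (S : SchauderBasisSys X) (K : ℝ≥0) : Prop :=
  ∀ (x : X) (D : Finset ℕ), S.IsGreedySet x D → ‖S.P D x‖ ≤ K * ‖x‖

-- `x` is approximated by its partial sums because `x` itself may have no greedy ordering.
lemma QuasiGreedy.exists_greedyProjectionBound (h : S.QuasiGreedy) :
    ∃ K, S.GreedyProjectionBound K := by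
  obtain ⟨K, hK⟩ := h
  refine ⟨K.toNNReal, fun x D hD => ?_⟩
  obtain ⟨N, hDN⟩ := D.exists_nat_subset_range
  refine ge_of_tendsto ((S.expansion x).norm.const_mul _) ?_
  filter_upwards [eventually_ge_atTop N] with n hn
  change _ ≤ _ * ‖S.P (Finset.range n) x‖
  have hDn : D ⊆ Finset.range n := hDN.trans (Finset.range_mono hn)
  have hgreedy : S.IsGreedySet (S.P (Finset.range n) x) D := fun i hi j hj => by
    rw [f_P, f_P, if_pos (hDn hi)]
    split_ifs
    · exact hD i hi j hj
    · simp
  obtain ⟨ρ, hρ, hLam⟩ := hgreedy.exists_isGreedyOrdering (F := Finset.range n)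
    fun j hj => by rw [f_P, if_neg hj]
  calc ‖S.P D x‖ = ‖S.G (S.P (Finset.range n) x) ρ D.card‖ := by
        rw [G_eq_P_Lam S _ hρ.1, hLam, P_P_of_subset hDn]
    _ ≤ K * ‖S.P (Finset.range n) x‖ := hK _ ρ _ hρ
    _ ≤ K.toNNReal * ‖S.P (Finset.range n) x‖ := by gcongr; exact K.le_coe_toNNReal

namespace GreedyProjectionBound

variable {K : ℝ≥0}

-- The superlevel sets of `w` in `D` are differences of two greedy sets of `x`.
lemma norm_sum_mul_smul_le (hK : S.GreedyProjectionBound K) {x : X}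
    {D : Finset ℕ} (hD : S.IsGreedySet x D) {w : ℕ → ℝ} (hw₀ : ∀ i ∈ D, 0 ≤ w i)
    (hw₁ : ∀ i ∈ D, w i ≤ 1)
    (hw : ∀ i ∈ D, ∀ j ∈ D, w i < w j → |S.f j x| ≤ |S.f i x|) :
    ‖∑ i ∈ D, (w i * S.f i x) • S.e i‖ ≤ 2 * K * ‖x‖ := by
  have hlevel : ∀ s, 0 < s → ‖∑ i ∈ D with s ≤ w i, S.f i x • S.e i‖ ≤ 2 * K * ‖x‖ := by
    intro s _
    have hgreedy : S.IsGreedySet x {i ∈ D | ¬ s ≤ w i} := fun i hi j hj => by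
      obtain ⟨hiD, hi⟩ := Finset.mem_filter.1 hi
      by_cases hjD : j ∈ D
      · have hsj : s ≤ w j := by simpa [hjD] using hj
        exact hw i hiD j hjD ((not_le.1 hi).trans_le hsj)
      · exact hD i hiD j hjD
    calc ‖∑ i ∈ D with s ≤ w i, S.f i x • S.e i‖ = ‖S.P D x - S.P {i ∈ D | ¬ s ≤ w i} x‖ :=
          congrArg norm (eq_sub_of_add_eq (Finset.sum_filter_add_sum_filter_not D _ _))
      _ ≤ K * ‖x‖ + K * ‖x‖ := norm_sub_le_of_le (hK x D hD) (hK x _ hgreedy)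
      _ = 2 * K * ‖x‖ := by ring
  simpa only [smul_smul, one_mul] using
    norm_sum_smul_le_of_superlevel D (fun i => S.f i x • S.e i) w hw₀ zero_le_one hw₁ hlevel

-- All coordinates on `B` being maximal, every subset of `B` is greedy: the two sign classes are.
lemma mul_norm_ind_le_of_abs_f_eq (hK : S.GreedyProjectionBound K) {x : X}
    {B : Finset ℕ} {t : ℝ} (hx : ∀ j, |S.f j x| ≤ t) (hB : ∀ i ∈ B, |S.f i x| = t) :
    t * ‖S.ind B‖ ≤ 2 * K * ‖x‖ := by
  have ht : 0 ≤ t := (abs_nonneg _).trans (hx 0)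
  have hpart : ∀ (A : Finset ℕ) (r : ℝ), A ⊆ B → |r| = t → (∀ i ∈ A, S.f i x = r) →
      t * ‖S.ind A‖ ≤ K * ‖x‖ := fun A r hA hr hAr => by
    calc t * ‖S.ind A‖ = ‖S.P A x‖ := by rw [P_eq_smul_ind hAr, norm_smul, Real.norm_eq_abs, hr]
      _ ≤ K * ‖x‖ := hK x A fun i hi j _ => (hx j).trans_eq (hB i (hA hi)).symm
  have hpos := hpart {i ∈ B | S.f i x = t} t (Finset.filter_subset _ _) (abs_of_nonneg ht)
    fun i hi => (Finset.mem_filter.1 hi).2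
  have hneg := hpart {i ∈ B | ¬ S.f i x = t} (-t) (Finset.filter_subset _ _)
    (by rw [abs_neg, abs_of_nonneg ht]) fun i hi => by
      obtain ⟨hi, hne⟩ := Finset.mem_filter.1 hi
      exact ((abs_eq ht).1 (hB i hi)).resolve_left hne
  have hsplit : S.ind B = S.ind {i ∈ B | S.f i x = t} + S.ind {i ∈ B | ¬ S.f i x = t} :=
    (Finset.sum_filter_add_sum_filter_not B _ _).symm
  calc t * ‖S.ind B‖
      ≤ t * ‖S.ind {i ∈ B | S.f i x = t}‖ + t * ‖S.ind {i ∈ B | ¬ S.f i x = t}‖ := by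
        rw [← mul_add, hsplit]
        gcongr
        exact norm_add_le _ _
    _ ≤ K * ‖x‖ + K * ‖x‖ := add_le_add hpos hneg
    _ = 2 * K * ‖x‖ := by ring

-- Shrinking every coordinate on `D` to absolute value `t` costs a factor `2 * K`.
lemma mul_norm_ind_le (hK : S.GreedyProjectionBound K) {x : X}
    {B D : Finset ℕ} {t : ℝ} (hD : S.IsThreshold x D t) (hB : B ⊆ D) :
    t * ‖S.ind B‖ ≤ 4 * K ^ 2 * ‖x‖ := by
  rcases hD.nonneg.eq_or_lt with rfl | ht₀
  · rw [zero_mul]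
    positivity
  have hpos : ∀ i ∈ D, 0 < |S.f i x| := fun i hi => ht₀.trans_le (hD.1 i hi)
  set u := ∑ i ∈ D, (t / |S.f i x| * S.f i x) • S.e i
  have hu_norm : ‖u‖ ≤ 2 * K * ‖x‖ :=
    hK.norm_sum_mul_smul_le hD.isGreedySet (fun i _ => by positivity)
      (fun i hi => (div_le_one (hpos i hi)).2 (hD.1 i hi))
      fun i hi j hj hlt => ((div_lt_div_iff_of_pos_left ht₀ (hpos i hi) (hpos j hj)).1 hlt).le
  have hu_mem : ∀ i ∈ D, |S.f i u| = t := fun i hi => by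
    rw [f_sum_smul_e, if_pos hi, abs_mul, abs_div, abs_abs, abs_of_pos ht₀,
      div_mul_cancel₀ _ (hpos i hi).ne']
  have hu_le : ∀ j, |S.f j u| ≤ t := fun j => by
    by_cases hj : j ∈ D
    · exact (hu_mem j hj).le
    · rw [f_sum_smul_e, if_neg hj, abs_zero]
      exact ht₀.le
  calc t * ‖S.ind B‖ ≤ 2 * K * ‖u‖ :=
        hK.mul_norm_ind_le_of_abs_f_eq hu_le fun i hi => hu_mem i (hB hi)
    _ ≤ 2 * K * (2 * K * ‖x‖) := by gcongr
    _ = 4 * K ^ 2 * ‖x‖ := by ring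

-- With `y = x - ∑ i ∈ A, a i • S.e i` and `E ⊆ A` its coordinates of size at least `t`,
-- `x - P_D x = (y - P_{D ∪ E} y) - P_{A \ E} y + P_A x`, and all coordinates in the last two
-- terms are at most `t`.
lemma norm_sub_P_le (hK : S.GreedyProjectionBound K) {x : X}
    {A D : Finset ℕ} (hAD : Disjoint A D) {t M : ℝ} (hD : S.IsThreshold x D t)
    (hM : ∀ B ⊆ A, ‖S.ind B‖ ≤ M) (a : ℕ → ℝ) :
    ‖x - S.P D x‖ ≤ (1 + K) * ‖x - ∑ i ∈ A, a i • S.e i‖ + 4 * t * M := by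
  set y := x - ∑ i ∈ A, a i • S.e i
  obtain ⟨E, hEA, hE⟩ := hD.exists_isThreshold_sub_sum hAD a
  have hx : ‖S.P A x‖ ≤ 2 * t * M :=
    norm_P_le_of_abs_f_le hD.nonneg (fun i hi => hD.2 i (Finset.disjoint_left.1 hAD hi)) hM
  have hy : ‖S.P (A \ E) y‖ ≤ 2 * t * M := by
    refine norm_P_le_of_abs_f_le hD.nonneg (fun i hi => hE.2 i ?_)
      fun B hB => hM B (hB.trans Finset.sdiff_subset)
    obtain ⟨hiA, hiE⟩ := Finset.mem_sdiff.1 hi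
    simp [hiE, Finset.disjoint_left.1 hAD hiA]
  have hDE : Disjoint (D ∪ E) (A \ E) :=
    Finset.disjoint_union_left.2
      ⟨hAD.symm.mono_right Finset.sdiff_subset, Finset.disjoint_sdiff⟩
  have hdecomp : x - S.P D x = y - S.P (D ∪ E) y - S.P (A \ E) y + S.P A x := by
    have hunion : D ∪ A = D ∪ E ∪ A \ E := by
      rw [Finset.union_assoc, Finset.union_sdiff_of_subset hEA]
    have hPx : S.P (D ∪ A) x = S.P D x + S.P A x := P_union hAD.symm x
    have hPy : S.P (D ∪ A) y = S.P (D ∪ E) y + S.P (A \ E) y := hunion ▸ P_union hDE y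
    have hxy : y - S.P (D ∪ A) y = x - S.P (D ∪ A) x :=
      sub_sum_sub_P_of_subset Finset.subset_union_right a x
    rw [sub_sub, ← hPy, hxy, hPx]
    abel
  calc ‖x - S.P D x‖ ≤ ‖y‖ + K * ‖y‖ + 2 * t * M + 2 * t * M :=
        hdecomp ▸ norm_add_le_of_le (norm_sub_le_of_le (norm_sub_le_of_le le_rfl
          (hK y _ hE.isGreedySet)) hy) hx
    _ = (1 + K) * ‖y‖ + 4 * t * M := by ring

end GreedyProjectionBound

/-- The basis is reverse partially greedy with constant `C`: `‖x - G_m(x)‖ ≤ C σ^R_m(x)`, with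
the infimum `σ^R_m(x)` spelled out as a quantification over the competing sums. -/
def ReversePartiallyGreedyWith (S : SchauderBasisSys X) (C : ℝ) : Prop :=
  ∀ (x : X) (ρ : ℕ → ℕ) (m : ℕ) (A : Finset ℕ) (a : ℕ → ℝ),
    S.IsGreedyOrdering x ρ → A.card = m → (∀ i ∈ A, ∀ j ∈ Lam ρ m, j < i) →
    ‖x - S.G x ρ m‖ ≤ C * ‖x - ∑ i ∈ A, a i • S.e i‖

lemma QuasiGreedy.exists_reversePartiallyGreedyWith (hQ : S.QuasiGreedy)
    (hR : S.ReverseConservative) : ∃ C, S.ReversePartiallyGreedyWith C := by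
  obtain ⟨K, hK⟩ := hQ.exists_greedyProjectionBound
  obtain ⟨Γ, hΓ⟩ := hR
  refine ⟨1 + K + 16 * |Γ| * K ^ 2, fun x ρ m A a hρ hAm hlt => ?_⟩
  have hcard : A.card = (Lam ρ m).card := hAm.trans (card_Lam hρ.1 m).symm
  rw [G_eq_P_Lam S x hρ.1]
  have hΛ := hρ.isGreedySet_Lam m
  rcases A.eq_empty_or_nonempty with rfl | hA
  · calc ‖x - S.P (Lam ρ m) x‖ ≤ ‖x‖ + K * ‖x‖ := norm_sub_le_of_le le_rfl (hK x _ hΛ)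
      _ = (1 + K + 0) * ‖x - ∑ i ∈ ∅, a i • S.e i‖ := by rw [Finset.sum_empty, sub_zero]; ring
      _ ≤ (1 + K + 16 * |Γ| * K ^ 2) * ‖x - ∑ i ∈ ∅, a i • S.e i‖ := by gcongr; positivity
  obtain ⟨t, ht⟩ := hΛ.exists_isThreshold (Finset.card_pos.1 (hcard ▸ hA.card_pos))
  have hAΛ : Disjoint A (Lam ρ m) :=
    Finset.disjoint_left.2 fun i hi hi' => (hlt i hi i hi').false
  set y := x - ∑ i ∈ A, a i • S.e i
  have hM : ∀ B ⊆ A, ‖S.ind B‖ ≤ |Γ| * ‖S.ind (Lam ρ m)‖ := fun B hB =>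
    (hΓ B _ (hcard ▸ Finset.card_le_card hB) fun i hi => hlt i (hB hi)).trans
      (by gcongr; exact le_abs_self Γ)
  have hind : t * ‖S.ind (Lam ρ m)‖ ≤ 4 * K ^ 2 * ‖y‖ := by
    obtain ⟨E, -, hE⟩ := ht.exists_isThreshold_sub_sum hAΛ a
    exact hK.mul_norm_ind_le hE Finset.subset_union_left
  calc ‖x - S.P (Lam ρ m) x‖ ≤ (1 + K) * ‖y‖ + 4 * t * (|Γ| * ‖S.ind (Lam ρ m)‖) :=
        hK.norm_sub_P_le hAΛ ht hM a
    _ = (1 + K) * ‖y‖ + 4 * |Γ| * (t * ‖S.ind (Lam ρ m)‖) := by ring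
    _ ≤ (1 + K) * ‖y‖ + 4 * |Γ| * (4 * K ^ 2 * ‖y‖) := by gcongr
    _ = (1 + K + 16 * |Γ| * K ^ 2) * ‖y‖ := by ring

namespace ReversePartiallyGreedyWith

variable {C : ℝ}

lemma norm_sub_G_le (hC : S.ReversePartiallyGreedyWith C) {x : X} {ρ : ℕ → ℕ}
    (hρ : S.IsGreedyOrdering x ρ) {A : Finset ℕ} {m : ℕ} (hAm : A.card ≤ m)
    (hlt : ∀ i ∈ A, ∀ j ∈ Lam ρ m, j < i) :
    ‖x - S.G x ρ m‖ ≤ C * ‖x - S.P A x‖ := by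
  obtain ⟨A', hAA', hcard, hlt'⟩ := exists_superset_card_eq_of_forall_lt hlt hAm
  have h := hC x ρ m A' (fun i => if i ∈ A then S.f i x else 0) hρ hcard hlt'
  simp only [ite_smul, zero_smul] at h
  rwa [Finset.sum_ite_mem, Finset.inter_eq_right.2 hAA'] at h

lemma quasiGreedy (hC : S.ReversePartiallyGreedyWith C) : S.QuasiGreedy := by
  refine ⟨1 + C, fun x ρ m hρ => ?_⟩
  have h : ‖x - S.G x ρ m‖ ≤ C * ‖x‖ := by
    simpa [P] using hC.norm_sub_G_le hρ (A := ∅) (m := m) (by simp) (by simp)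
  calc ‖S.G x ρ m‖ = ‖x - (x - S.G x ρ m)‖ := by rw [sub_sub_cancel]
    _ ≤ ‖x‖ + C * ‖x‖ := norm_sub_le_of_le le_rfl h
    _ = (1 + C) * ‖x‖ := by ring

lemma reverseConservative (hC : S.ReversePartiallyGreedyWith C) : S.ReverseConservative := by
  refine ⟨C, fun A B hAB hlt => ?_⟩
  have hdisj : Disjoint A B := Finset.disjoint_left.2 fun i hi hi' => (hlt i hi i hi').false
  set x := S.ind (A ∪ B)
  have hx : x = S.ind A + S.ind B := Finset.sum_union hdisj
  have hP : ∀ D ⊆ A ∪ B, S.P D x = S.ind D := fun D hD => by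
    rw [P_eq_smul_ind (r := 1) fun i hi => by rw [f_ind, if_pos (hD hi)], one_smul]
  have hgreedy : S.IsGreedySet x B := fun i hi j _ => by
    rw [f_ind, f_ind, if_pos (Finset.mem_union_right _ hi)]
    split_ifs <;> simp
  obtain ⟨ρ, hρ, hLam⟩ := hgreedy.exists_isGreedyOrdering (F := A ∪ B)
    fun n hn => by rw [f_ind, if_neg hn]
  have h := hC.norm_sub_G_le hρ hAB (hLam.symm ▸ hlt)
  rwa [G_eq_P_Lam S x hρ.1, hLam, hP B Finset.subset_union_right, hP A Finset.subset_union_left,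
    hx, add_sub_cancel_right, add_sub_cancel_left] at h

end ReversePartiallyGreedyWith

end SchauderBasisSys

theorem stmt_6_general {X : Type*} [NormedAddCommGroup X] [NormedSpace ℝ X]
    (S : SchauderBasisSys X) :
    (S.QuasiGreedy ∧ S.ReverseConservative) ↔
      ∃ C : ℝ, ∀ (x : X) (ρ : ℕ → ℕ) (m : ℕ) (A : Finset ℕ) (a : ℕ → ℝ),
        S.IsGreedyOrdering x ρ → A.card = m →
        (∀ i ∈ A, ∀ j ∈ Lam ρ m, j < i) →
        ‖x - S.G x ρ m‖ ≤ C * ‖x - ∑ i ∈ A, a i • S.e i‖ := by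
  change _ ↔ ∃ C, S.ReversePartiallyGreedyWith C
  exact ⟨fun ⟨hQ, hR⟩ => hQ.exists_reversePartiallyGreedyWith hR,
    fun ⟨_, hC⟩ => ⟨hC.quasiGreedy, hC.reverseConservative⟩⟩

/-- A Schauder basis of a real Banach space is quasi-greedy and reverse
conservative if and only if there is a constant `C` such that
`‖x - G_m(x)‖ ≤ C ‖x - ∑_{i ∈ A} a_i e_i‖` for every `x`, `m`, every greedy ordering,
every finite `A` with `|A| = m` and `min A > β_m(x) = max Λ_m(x)`, and all scalars
`(a_i)` (property `(**)`, i.e. `‖x - G_m(x)‖ ≤ C σ^R_m(x)`). -/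
theorem stmt_6 {X : Type*} [NormedAddCommGroup X] [NormedSpace ℝ X] [CompleteSpace X]
    (S : SchauderBasisSys X) :
    (S.QuasiGreedy ∧ S.ReverseConservative) ↔
      ∃ C : ℝ, ∀ (x : X) (ρ : ℕ → ℕ) (m : ℕ) (A : Finset ℕ) (a : ℕ → ℝ),
        S.IsGreedyOrdering x ρ → A.card = m →
        (∀ i ∈ A, ∀ j ∈ Lam ρ m, j < i) →
        ‖x - S.G x ρ m‖ ≤ C * ‖x - ∑ i ∈ A, a i • S.e i‖ :=
  stmt_6_general S
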